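/- Existence of bounded solutions: Let (γ_n) be a sequence of ratios of odd positive integers with γ⁺ = sup γ_n ≤ 1, α ≥ 1, k a positive integer, f : ℝ → ℝ locally Lipschitz, r : ℕ → ℝ∖{0}, a, q : ℕ → ℝ with ∑_{n}[ |1/r_n| ∑_{i≥n} |a_i| ]^{1/γ⁺} < ∞, ∑_{n}[ |1/r_n| ∑_{i≥n} |q_i| ]^{1/γ⁺} < ∞, ∑|a_i| < ∞, ∑|q_i| < ∞, and p : ℕ → ℝ∖{0} with −1 < liminf p_n ≤ limsup p_n < 1. Then there exists a bounded sequence x : {k, k+1, ...} → ℝ satisfying Δ( r_n (Δ(x_n + p_n x_{n−k}))^{γ_n} ) + q_n x_n^α + a_n f(x_{n+1}) = 0 for all sufficiently large n. -/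

import Mathlib

/-- Sign-preserving real power (odd-power extension to all reals). -/
noncomputable def oddPow (t e : ℝ) : ℝ := Real.sign t * |t| ^ e

/-- `x` is a ratio of odd positive integers. -/
def IsOddRatio (x : ℝ) : Prop :=
  ∃ a b : ℕ, Odd a ∧ Odd b ∧ 0 < a ∧ 0 < b ∧ x = (a : ℝ) / (b : ℝ)


lemma fixpt_aux (T : (ℕ → ℝ) → (ℕ → ℝ)) (c : ℝ) (hc0 : 0 ≤ c) (hc1 : c < 1)
    (hmap : ∀ x, (∀ n, |x n| ≤ 1) → ∀ n, |T x n| ≤ 1)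
    (hcon : ∀ x y D, (∀ n, |x n| ≤ 1) → (∀ n, |y n| ≤ 1) → (∀ n, |x n - y n| ≤ D) →
      ∀ n, |T x n - T y n| ≤ c * D) :
    ∃ x : ℕ → ℝ, (∀ n, |x n| ≤ 1) ∧ ∀ n, T x n = x n := by
  set X : ℕ → ℕ → ℝ := fun m => T^[m] (fun _ => 0) with hX
  have hXs : ∀ m, X (m + 1) = T (X m) := fun m => Function.iterate_succ_apply' T m _
  have hXb : ∀ m n, |X m n| ≤ 1 := by
    intro m
    induction m with
    | zero => intro n; simp [hX]
    | succ m ih => rw [hXs]; exact hmap _ ih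
  have hXd : ∀ m n, |X m n - X (m + 1) n| ≤ 1 * c ^ m := by
    intro m
    induction m with
    | zero => intro n; have := hXb 1 n; simpa [hX] using this
    | succ m ih =>
      intro n
      have := hcon _ _ _ (hXb m) (hXb (m + 1)) ih n
      rw [← hXs, ← hXs] at this
      rw [pow_succ]; linarith
  have hlim : ∀ n, ∃ l, Filter.Tendsto (fun m => X m n) Filter.atTop (nhds l) := fun n =>
    cauchySeq_tendsto_of_complete (cauchySeq_of_le_geometric c 1 hc1 (fun m => by
      rw [Real.dist_eq]; exact hXd m n))
  choose x hx using hlim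
  have hxb : ∀ n, |x n| ≤ 1 := fun n =>
    le_of_tendsto (hx n).abs (Filter.Eventually.of_forall fun m => hXb m n)
  have hxd : ∀ m n, |X m n - x n| ≤ 1 * c ^ m / (1 - c) := fun m n => by
    have := dist_le_of_le_geometric_of_tendsto c 1 hc1 (fun m => by
      rw [Real.dist_eq]; exact hXd m n) (hx n) m
    rwa [Real.dist_eq] at this
  refine ⟨x, hxb, fun n => ?_⟩
  have h1 : Filter.Tendsto (fun m => X (m + 1) n) Filter.atTop (nhds (x n)) :=
    (hx n).comp (Filter.tendsto_add_atTop_nat 1)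
  have h2 : Filter.Tendsto (fun m => X (m + 1) n) Filter.atTop (nhds (T x n)) := by
    rw [tendsto_iff_dist_tendsto_zero]
    have h3 : Filter.Tendsto (fun m : ℕ => c * (1 * c ^ m / (1 - c))) Filter.atTop (nhds 0) := by
      have := (tendsto_pow_atTop_nhds_zero_of_lt_one hc0 hc1)
      simpa using ((this.const_mul 1).div_const (1 - c)).const_mul c
    refine squeeze_zero (fun _ => dist_nonneg) (fun m => ?_) h3
    rw [Real.dist_eq, hXs]
    exact hcon _ _ _ (hXb m) hxb (hxd m) n
  exact tendsto_nhds_unique h2 h1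

lemma oddPow_nonneg_eq {t s : ℝ} (ht : 0 ≤ t) (hs : s ≠ 0) : oddPow t s = t ^ s := by
  unfold oddPow
  rcases ht.eq_or_lt with rfl | h
  · simp [Real.zero_rpow hs]
  · rw [Real.sign_of_pos h, abs_of_pos h, one_mul]

lemma oddPow_neg_eq (t s : ℝ) : oddPow (-t) s = - oddPow t s := by
  unfold oddPow
  rw [abs_neg, Real.sign_neg]; ring

lemma abs_oddPow_eq {t s : ℝ} (hs : s ≠ 0) : |oddPow t s| = |t| ^ s := by
  rcases le_total 0 t with h | h
  · rw [oddPow_nonneg_eq h hs, abs_of_nonneg h, abs_of_nonneg (Real.rpow_nonneg h _)]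
  · have h' : 0 ≤ -t := by linarith
    have := oddPow_neg_eq (-t) s
    rw [neg_neg] at this
    rw [this, abs_neg, oddPow_nonneg_eq h' hs, abs_of_nonpos h,
      abs_of_nonneg (Real.rpow_nonneg h' _)]

lemma oddPow_inv {t s : ℝ} (hs : 0 < s) : oddPow (oddPow t (1 / s)) s = t := by
  have h1 : (1 / s) ≠ 0 := by positivity
  have key : ∀ u : ℝ, 0 ≤ u → oddPow (oddPow u (1 / s)) s = u := by
    intro u hu
    rw [oddPow_nonneg_eq hu h1, oddPow_nonneg_eq (Real.rpow_nonneg hu _) hs.ne',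
      ← Real.rpow_mul hu, one_div_mul_cancel hs.ne', Real.rpow_one]
  rcases le_total 0 t with h | h
  · exact key t h
  · have h3 := key (-t) (by linarith)
    rw [oddPow_neg_eq, oddPow_neg_eq] at h3
    linarith

lemma rpow_sub_le_aux {u v s : ℝ} (hv : 0 ≤ v) (huv : v ≤ u) (hs : 1 ≤ s) :
    u ^ s - v ^ s ≤ s * u ^ (s - 1) * (u - v) := by
  rcases (hv.trans huv).eq_or_lt with h | h
  · have : v = 0 := by linarith
    subst this; rw [← h]; simp
  · have hb := one_add_mul_self_le_rpow_one_add (s := v / u - 1)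
      (by have : 0 ≤ v / u := by positivity
          linarith) hs
    rw [add_sub_cancel, Real.div_rpow hv h.le, le_div_iff₀ (by positivity)] at hb
    have e : u ^ s = u ^ (s - 1) * u := by
      rw [Real.rpow_sub_one h.ne']; field_simp
    have e2 : (1 + s * (v / u - 1)) * u ^ s = u ^ s + s * u ^ (s - 1) * (v - u) := by
      rw [add_mul, one_mul, e]; field_simp
    rw [e2] at hb
    linarith

lemma oddPow_lip {u v s M : ℝ} (hs : 1 ≤ s) (hu : |u| ≤ M) (hv : |v| ≤ M) :
    |oddPow u s - oddPow v s| ≤ s * M ^ (s - 1) * |u - v| := by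
  have hs0 : s ≠ 0 := by positivity
  have hM : 0 ≤ M := (abs_nonneg u).trans hu
  -- both nonnegative, ordered
  have A : ∀ a b : ℝ, 0 ≤ b → b ≤ a → a ≤ M →
      |oddPow a s - oddPow b s| ≤ s * M ^ (s - 1) * |a - b| := by
    intro a b hb hab haM
    have ha := hb.trans hab
    rw [oddPow_nonneg_eq ha hs0, oddPow_nonneg_eq hb hs0, abs_of_nonneg (sub_nonneg.2 hab),
      abs_of_nonneg (sub_nonneg.2 (Real.rpow_le_rpow hb hab (by linarith)))]
    refine (rpow_sub_le_aux hb hab hs).trans ?_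
    have : a ^ (s - 1) ≤ M ^ (s - 1) := Real.rpow_le_rpow ha haM (by linarith)
    have h2 : 0 ≤ a - b := by linarith
    gcongr
  have A' : ∀ a b : ℝ, 0 ≤ a → 0 ≤ b → a ≤ M → b ≤ M →
      |oddPow a s - oddPow b s| ≤ s * M ^ (s - 1) * |a - b| := by
    intro a b ha hb haM hbM
    rcases le_total b a with h | h
    · exact A a b hb h haM
    · rw [abs_sub_comm, abs_sub_comm a b]; exact A b a ha h hbM
  have P : ∀ a : ℝ, 0 ≤ a → a ≤ M → a ^ s ≤ s * M ^ (s - 1) * a := by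
    intro a ha haM
    have h := A' a 0 ha le_rfl haM hM
    rw [oddPow_nonneg_eq ha hs0, oddPow_nonneg_eq le_rfl hs0, Real.zero_rpow hs0, sub_zero,
      sub_zero, abs_of_nonneg ha, abs_of_nonneg (Real.rpow_nonneg ha _)] at h
    exact h
  have B : ∀ a b : ℝ, 0 ≤ a → 0 ≤ b → a ≤ M → b ≤ M →
      |oddPow a s + oddPow b s| ≤ s * M ^ (s - 1) * |a + b| := by
    intro a b ha hb haM hbM
    have h1 := P a ha haM
    have h2 := P b hb hbM
    rw [oddPow_nonneg_eq ha hs0, oddPow_nonneg_eq hb hs0, abs_of_nonneg (add_nonneg ha hb),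
      abs_of_nonneg (add_nonneg (Real.rpow_nonneg ha _) (Real.rpow_nonneg hb _))]
    linarith
  have nu : oddPow u s = - oddPow (-u) s := by rw [oddPow_neg_eq]; ring
  have nv : oddPow v s = - oddPow (-v) s := by rw [oddPow_neg_eq]; ring
  have hu' := abs_le.1 hu
  have hv' := abs_le.1 hv
  rcases le_total 0 u with h | h <;> rcases le_total 0 v with h' | h'
  · exact A' u v h h' hu'.2 hv'.2
  · have := B u (-v) h (by linarith) hu'.2 (by linarith)
    rw [nv, sub_neg_eq_add, sub_eq_add_neg]; exact this
  · have := B (-u) v (by linarith) h' (by linarith) hv'.2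
    rw [nu, ← abs_neg, ← abs_neg (u - v)]
    convert this using 2
    · ring_nf
    · ring_nf
  · have := A' (-u) (-v) (by linarith) (by linarith) (by linarith) (by linarith)
    rw [nu, nv, ← abs_neg, ← abs_neg (u - v)]
    convert this using 2
    · ring_nf
    · ring_nf

/-- tail of a series -/
noncomputable def tl (c : ℕ → ℝ) (n : ℕ) : ℝ := ∑' i, c (n + i)

lemma shift_summable {c : ℕ → ℝ} (h : Summable c) (n : ℕ) : Summable fun i => c (n + i) := by
  simpa [add_comm] using (summable_nat_add_iff n).2 h

lemma shift_summable_of {c b : ℕ → ℝ} (hb : Summable b) (n : ℕ)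
    (h : ∀ i, n ≤ i → |c i| ≤ b i) : Summable fun i => c (n + i) :=
  Summable.of_norm_bounded (shift_summable hb n) (fun i => h _ (Nat.le_add_right _ _))

lemma tl_bound {c b : ℕ → ℝ} (hb : Summable b) (n : ℕ)
    (h : ∀ i, n ≤ i → |c i| ≤ b i) : |tl c n| ≤ tl b n := by
  unfold tl
  rw [← Real.norm_eq_abs]
  exact tsum_of_norm_bounded (shift_summable hb n).hasSum (fun i => h _ (Nat.le_add_right _ _))

lemma tl_succ {c : ℕ → ℝ} (n : ℕ) (h : Summable fun i => c (n + i)) :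
    tl c n = c n + tl c (n + 1) := by
  unfold tl
  rw [h.tsum_eq_zero_add]
  simp only [add_zero]
  congr 1
  refine tsum_congr fun i => ?_
  congr 1; ring

lemma tl_sub {c d : ℕ → ℝ} (n : ℕ) (h : Summable fun i => c (n + i))
    (h' : Summable fun i => d (n + i)) :
    tl c n - tl d n = tl (fun i => c i - d i) n := (h.tsum_sub h').symm

lemma tl_mul (D : ℝ) (c : ℕ → ℝ) (n : ℕ) : tl (fun i => D * c i) n = D * tl c n := tsum_mul_left

lemma mul_rpow_le_aux {s s0 w : ℝ} (hs0 : 1 ≤ s0) (hs : s0 ≤ s) (hw : 0 ≤ w) (hw1 : 2 * w ≤ 1) :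
    s * w ^ s ≤ (2 * w) ^ s0 := by
  have h1 : s ≤ 2 ^ s := by
    have := one_add_mul_self_le_rpow_one_add (s := 1) (by norm_num) (hs0.trans hs)
    norm_num at this
    linarith
  calc s * w ^ s ≤ 2 ^ s * w ^ s := by gcongr
    _ = (2 * w) ^ s := (Real.mul_rpow (by norm_num) hw).symm
    _ ≤ (2 * w) ^ s0 := Real.rpow_le_rpow_of_exponent_ge' (by positivity) hw1 (by linarith) hs

/-- Existence of bounded solutions: let `(γₙ)` be ratios of odd positive integers with
`γ⁺ = sup γₙ ≤ 1`, `α ≥ 1`, `k` a positive integer, `f` locally Lipschitz,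
`rₙ ≠ 0`, `pₙ ≠ 0`, `∑ₙ (|1/rₙ| ∑_{i≥n}|aᵢ|)^(1/γ⁺) < ∞`,
`∑ₙ (|1/rₙ| ∑_{i≥n}|qᵢ|)^(1/γ⁺) < ∞`, `∑|aᵢ| < ∞`, `∑|qᵢ| < ∞`, and
`−1 < liminf pₙ ≤ limsup pₙ < 1`. Then there is a bounded sequence `x` satisfying
`Δ(rₙ (Δ(xₙ + pₙ x_{n−k}))^{γₙ}) + qₙ xₙ^α + aₙ f(x_{n+1}) = 0`
for all sufficiently large `n` (in particular on a tail of `{k, k+1, …}`). -/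
theorem stmt11 (γ : ℕ → ℝ) (γplus α : ℝ) (k : ℕ) (p r a q : ℕ → ℝ) (f : ℝ → ℝ)
    (hγodd : ∀ n, IsOddRatio (γ n))
    (hγsup : γplus = ⨆ n, γ n) (hγub : ∀ n, γ n ≤ γplus) (hγ1 : γplus ≤ 1)
    (hα : 1 ≤ α) (hk : 0 < k)
    (hf : LocallyLipschitz f)
    (hr : ∀ n, r n ≠ 0) (hp0 : ∀ n, p n ≠ 0)
    (ha1 : Summable fun n => (|1 / r n| * ∑' i, |a (n + i)|) ^ (1 / γplus))
    (hq1 : Summable fun n => (|1 / r n| * ∑' i, |q (n + i)|) ^ (1 / γplus))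
    (ha2 : Summable fun n => |a n|) (hq2 : Summable fun n => |q n|)
    (hpl : (-1 : EReal) < Filter.liminf (fun n => (p n : EReal)) Filter.atTop)
    (hplu : Filter.liminf (fun n => (p n : EReal)) Filter.atTop ≤
      Filter.limsup (fun n => (p n : EReal)) Filter.atTop)
    (hpu : Filter.limsup (fun n => (p n : EReal)) Filter.atTop < 1) :
    ∃ x : ℕ → ℝ, (∃ d : ℝ, ∀ n, |x n| ≤ d) ∧
      ∃ N, k ≤ N ∧ ∀ n, N ≤ n →
        r (n + 1) * oddPow ((x (n + 2) + p (n + 2) * x (n + 2 - k)) -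
            (x (n + 1) + p (n + 1) * x (n + 1 - k))) (γ (n + 1)) -
          r n * oddPow ((x (n + 1) + p (n + 1) * x (n + 1 - k)) -
            (x n + p n * x (n - k))) (γ n) +
          q n * oddPow (x n) α + a n * f (x (n + 1)) = 0 := by
  -- exponents
  have hγpos : ∀ n, 0 < γ n := by
    intro n
    obtain ⟨c, d, -, -, hc, hd, h⟩ := hγodd n
    rw [h]
    have : (0 : ℝ) < c := by exact_mod_cast hc
    have : (0 : ℝ) < d := by exact_mod_cast hd
    positivity
  have hγp : 0 < γplus := (hγpos 0).trans_le (hγub 0)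
  set s0 : ℝ := 1 / γplus with hs0def
  have hs0 : 1 ≤ s0 := by rw [hs0def, le_div_iff₀ hγp]; linarith
  have hs : ∀ n, s0 ≤ 1 / γ n := fun n => one_div_le_one_div_of_le (hγpos n) (hγub n)
  -- bound on p
  obtain ⟨pp, hpp0, hpp1, N0, hN0⟩ : ∃ pp : ℝ, 0 ≤ pp ∧ pp < 1 ∧ ∃ N0, ∀ n, N0 ≤ n → |p n| ≤ pp := by
    obtain ⟨l, hl1, hl2⟩ := EReal.lt_iff_exists_real_btwn.1 hpl
    obtain ⟨u, hu1, hu2⟩ := EReal.lt_iff_exists_real_btwn.1 hpu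
    have e1 := Filter.eventually_lt_of_lt_liminf hl2
    have e2 := Filter.eventually_lt_of_limsup_lt hu1
    obtain ⟨N0, hN0⟩ := Filter.eventually_atTop.1 (e1.and e2)
    have hl : -1 < l := by
      rw [← EReal.coe_lt_coe_iff]
      simpa using hl1
    have hu : u < 1 := by exact_mod_cast hu2
    refine ⟨max 0 (max (-l) u), le_max_left _ _, ?_, N0, fun n hn => ?_⟩
    · refine max_lt one_pos (max_lt (by linarith) hu)
    · obtain ⟨h1, h2⟩ := hN0 n hn
      have h1 : l < p n := by exact_mod_cast h1
      have h2 : p n < u := by exact_mod_cast h2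
      have := le_max_right 0 (max (-l) u)
      have := le_max_left (-l) u
      have := le_max_right (-l) u
      rw [abs_le]; constructor <;> linarith
  -- constant
  obtain ⟨K, hK⟩ := LocallyLipschitzOn.exists_lipschitzOnWith_of_compact
    (isCompact_Icc (a := (-1 : ℝ)) (b := 1)) hf.locallyLipschitzOn
  set C : ℝ := α + K + |f 0| with hC
  have hK0 : (0 : ℝ) ≤ K := K.2
  have hf0 := abs_nonneg (f 0)
  have hflip : ∀ u v : ℝ, |u| ≤ 1 → |v| ≤ 1 → |f u - f v| ≤ K * |u - v| := by
    intro u v hu hv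
    have := hK.dist_le_mul u (abs_le.1 hu) v (abs_le.1 hv)
    simpa [Real.dist_eq] using this
  have hfC : ∀ u : ℝ, |u| ≤ 1 → |f u| ≤ C := by
    intro u hu
    have h1 := hflip u 0 hu (by simp)
    have h2 : |f u| ≤ |f u - f 0| + |f 0| := by
      have := abs_add_le (f u - f 0) (f 0); simpa using this
    rw [sub_zero] at h1
    have : (K : ℝ) * |u| ≤ K := mul_le_of_le_one_right hK0 hu
    linarith
  have hflipC : ∀ u v D : ℝ, |u| ≤ 1 → |v| ≤ 1 → |u - v| ≤ D → |f u - f v| ≤ C * D := by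
    intro u v D hu hv hD
    have hD0 := (abs_nonneg _).trans hD
    refine (hflip u v hu hv).trans ?_
    have : (K : ℝ) ≤ C := by linarith
    gcongr
  have hα0 : α ≠ 0 := by positivity
  have hoC : ∀ u : ℝ, |u| ≤ 1 → |oddPow u α| ≤ C := by
    intro u hu
    rw [abs_oddPow_eq hα0]
    have := Real.rpow_le_one (abs_nonneg u) hu (by linarith : 0 ≤ α)
    linarith
  have holipC : ∀ u v D : ℝ, |u| ≤ 1 → |v| ≤ 1 → |u - v| ≤ D →
      |oddPow u α - oddPow v α| ≤ C * D := by
    intro u v D hu hv hD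
    have hD0 := (abs_nonneg _).trans hD
    have := oddPow_lip hα hu hv
    rw [Real.one_rpow, mul_one] at this
    refine this.trans ?_
    have : α ≤ C := by linarith
    gcongr
  have hC0 : 0 ≤ C := by linarith
  set b : ℕ → ℝ := fun i => C * (|q i| + |a i|) with hb
  have hbs : Summable b := (hq2.add ha2).mul_left C
  set G : (ℕ → ℝ) → ℕ → ℝ := fun x i => q i * oddPow (x i) α + a i * f (x (i + 1)) with hG
  have hGb : ∀ x, (∀ n, |x n| ≤ 1) → ∀ i, |G x i| ≤ b i := by
    intro x hx i
    have h1 := hoC _ (hx i)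
    have h2 := hfC _ (hx (i + 1))
    calc |G x i| ≤ |q i * oddPow (x i) α| + |a i * f (x (i + 1))| := abs_add_le _ _
      _ = |q i| * |oddPow (x i) α| + |a i| * |f (x (i + 1))| := by rw [abs_mul, abs_mul]
      _ ≤ |q i| * C + |a i| * C := by gcongr
      _ = b i := by rw [hb]; ring
  have hGd : ∀ x y D, (∀ n, |x n| ≤ 1) → (∀ n, |y n| ≤ 1) → (∀ n, |x n - y n| ≤ D) →
      ∀ i, |G x i - G y i| ≤ D * b i := by
    intro x y D hx hy hD i
    have h1 := holipC _ _ _ (hx i) (hy i) (hD i)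
    have h2 := hflipC _ _ _ (hx (i + 1)) (hy (i + 1)) (hD (i + 1))
    calc |G x i - G y i| = |q i * (oddPow (x i) α - oddPow (y i) α)
            + a i * (f (x (i + 1)) - f (y (i + 1)))| := by simp only [hG]; congr 1; ring
      _ ≤ |q i * (oddPow (x i) α - oddPow (y i) α)|
            + |a i * (f (x (i + 1)) - f (y (i + 1)))| := abs_add_le _ _
      _ = |q i| * |oddPow (x i) α - oddPow (y i) α|
            + |a i| * |f (x (i + 1)) - f (y (i + 1))| := by rw [abs_mul, abs_mul]
      _ ≤ |q i| * (C * D) + |a i| * (C * D) := by gcongr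
      _ = D * b i := by rw [hb]; ring
  have hGs : ∀ x, (∀ n, |x n| ≤ 1) → ∀ n, Summable fun i => G x (n + i) := fun x hx n =>
    shift_summable_of hbs n (fun i _ => hGb x hx i)
  set w : ℕ → ℝ := fun n => |1 / r n| * tl b n with hw
  have hb0 : ∀ i, 0 ≤ b i := fun i => by simp only [hb]; positivity
  have hw0 : ∀ n, 0 ≤ w n := fun n => mul_nonneg (abs_nonneg _) (tsum_nonneg fun i => hb0 _)
  set U : (ℕ → ℝ) → ℕ → ℝ := fun x n => 1 / r n * tl (G x) n with hU
  have hUb : ∀ x, (∀ n, |x n| ≤ 1) → ∀ n, |U x n| ≤ w n := by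
    intro x hx n
    simp only [hU, hw, abs_mul]
    exact mul_le_mul_of_nonneg_left (tl_bound hbs n (fun i _ => hGb x hx i)) (abs_nonneg _)
  have hUd : ∀ x y D, (∀ n, |x n| ≤ 1) → (∀ n, |y n| ≤ 1) → (∀ n, |x n - y n| ≤ D) →
      ∀ n, |U x n - U y n| ≤ D * w n := by
    intro x y D hx hy hD n
    have h1 : U x n - U y n = 1 / r n * tl (fun i => G x i - G y i) n := by
      rw [← tl_sub n (hGs x hx n) (hGs y hy n)]; simp only [hU]; ring
    rw [h1, abs_mul]
    have h2 := tl_bound (hbs.mul_left D) n (fun i _ => hGd x y D hx hy hD i)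
    rw [tl_mul] at h2
    calc |1 / r n| * |tl (fun i => G x i - G y i) n| ≤ |1 / r n| * (D * tl b n) := by gcongr
      _ = D * w n := by simp only [hw]; ring
  -- summability of e
  set e : ℕ → ℝ := fun n => (2 * w n) ^ s0 with he
  have he0 : ∀ n, 0 ≤ e n := fun n => Real.rpow_nonneg (by have := hw0 n; positivity) _
  have hes : Summable e := by
    have hsum := ((hq1.mul_left ((4 * C) ^ s0)).add (ha1.mul_left ((4 * C) ^ s0)))
    refine Summable.of_nonneg_of_le he0 (fun n => ?_) hsum
    set A := |1 / r n| * ∑' i, |a (n + i)| with hA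
    set Q := |1 / r n| * ∑' i, |q (n + i)| with hQ
    have hA0 : 0 ≤ A := mul_nonneg (abs_nonneg _) (tsum_nonneg fun i => abs_nonneg _)
    have hQ0 : 0 ≤ Q := mul_nonneg (abs_nonneg _) (tsum_nonneg fun i => abs_nonneg _)
    have hwn : w n = C * (Q + A) := by
      have : tl b n = C * (∑' i, |q (n + i)| + ∑' i, |a (n + i)|) := by
        rw [← (shift_summable hq2 n).tsum_add (shift_summable ha2 n), ← tsum_mul_left]; rfl
      simp only [hw, this, hA, hQ]; ring
    rw [← Real.mul_rpow (by positivity) hQ0, ← Real.mul_rpow (by positivity) hA0]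
    simp only [he, hwn]
    rcases le_total Q A with h | h
    · have h1 : (2 * (C * (Q + A))) ^ s0 ≤ (4 * C * A) ^ s0 :=
        Real.rpow_le_rpow (by positivity) (by nlinarith) (by linarith)
      have h2 : 0 ≤ (4 * C * Q) ^ s0 := Real.rpow_nonneg (by positivity) _
      linarith
    · have h1 : (2 * (C * (Q + A))) ^ s0 ≤ (4 * C * Q) ^ s0 :=
        Real.rpow_le_rpow (by positivity) (by nlinarith) (by linarith)
      have h2 : 0 ≤ (4 * C * A) ^ s0 := Real.rpow_nonneg (by positivity) _
      linarith
  -- choose N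
  obtain ⟨N1, hN1⟩ : ∃ N1, ∀ n, N1 ≤ n → 2 * w n ≤ 1 := by
    obtain ⟨N1, hN1⟩ := Filter.eventually_atTop.1
      (hes.tendsto_atTop_zero.eventually (gt_mem_nhds one_pos))
    refine ⟨N1, fun n hn => ?_⟩
    by_contra hcon
    have := Real.one_le_rpow (le_of_lt (not_le.1 hcon)) (by linarith : 0 ≤ s0)
    exact absurd (hN1 n hn) (not_lt.2 this)
  obtain ⟨N2, hN2⟩ : ∃ N2, ∀ n, N2 ≤ n → tl e n ≤ (1 - pp) / 2 := by
    have ht := tendsto_sum_nat_add e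
    obtain ⟨N2, hN2⟩ := Filter.eventually_atTop.1
      (ht.eventually (gt_mem_nhds (by linarith : (0 : ℝ) < (1 - pp) / 2)))
    refine ⟨N2, fun n hn => ?_⟩
    have := (hN2 n hn).le
    unfold tl
    simpa [add_comm] using this
  set N := N0 + N1 + N2 + k with hN
  set g : (ℕ → ℝ) → ℕ → ℝ := fun x n => oddPow (U x n) (1 / γ n) with hg
  have hgb : ∀ x, (∀ n, |x n| ≤ 1) → ∀ n, N ≤ n → |g x n| ≤ e n := by
    intro x hx n hn
    have h1 : 1 ≤ 1 / γ n := hs0.trans (hs n)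
    simp only [hg]
    rw [abs_oddPow_eq (by linarith)]
    have h2 : |U x n| ^ (1 / γ n) ≤ w n ^ (1 / γ n) :=
      Real.rpow_le_rpow (abs_nonneg _) (hUb x hx n) (by linarith)
    have h3 := mul_rpow_le_aux hs0 (hs n) (hw0 n) (hN1 n (by omega))
    have h4 : w n ^ (1 / γ n) ≤ 1 / γ n * w n ^ (1 / γ n) :=
      le_mul_of_one_le_left (Real.rpow_nonneg (hw0 n) _) h1
    exact h2.trans (h4.trans h3)
  have hgd : ∀ x y D, (∀ n, |x n| ≤ 1) → (∀ n, |y n| ≤ 1) → (∀ n, |x n - y n| ≤ D) →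
      ∀ n, N ≤ n → |g x n - g y n| ≤ D * e n := by
    intro x y D hx hy hD n hn
    have hD0 := (abs_nonneg _).trans (hD 0)
    have h1 : 1 ≤ 1 / γ n := hs0.trans (hs n)
    have h2 := oddPow_lip h1 (hUb x hx n) (hUb y hy n)
    have h3 := mul_rpow_le_aux hs0 (hs n) (hw0 n) (hN1 n (by omega))
    have h5 : w n ^ (1 / γ n - 1) * w n = w n ^ (1 / γ n) := by
      rcases (hw0 n).eq_or_lt with h | h
      · rw [← h, mul_zero, Real.zero_rpow (by linarith)]
      · rw [Real.rpow_sub_one h.ne']; field_simp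
    have h6 : 0 ≤ w n ^ (1 / γ n - 1) := Real.rpow_nonneg (hw0 n) _
    calc |g x n - g y n| ≤ 1 / γ n * w n ^ (1 / γ n - 1) * |U x n - U y n| := h2
      _ ≤ 1 / γ n * w n ^ (1 / γ n - 1) * (D * w n) := by
        refine mul_le_mul_of_nonneg_left (hUd x y D hx hy hD n) (mul_nonneg (by linarith) h6)
      _ = D * (1 / γ n * (w n ^ (1 / γ n - 1) * w n)) := by ring
      _ ≤ D * e n := by rw [h5]; gcongr
  have hgs : ∀ x, (∀ n, |x n| ≤ 1) → ∀ n, N ≤ n → Summable fun i => g x (n + i) :=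
    fun x hx n hn => shift_summable_of hes n (fun i hi => hgb x hx i (hn.trans hi))
  set T : (ℕ → ℝ) → ℕ → ℝ := fun x n => if n < N then 0 else - p n * x (n - k) - tl (g x) n with hT
  obtain ⟨x, hx, hfix⟩ := fixpt_aux T ((1 + pp) / 2) (by linarith) (by linarith)
    (by
      intro x hx n
      simp only [hT]
      split_ifs with h
      · simp
      · have hn : N ≤ n := not_lt.1 h
        have h1 := tl_bound hes n (fun i hi => hgb x hx i (hn.trans hi))
        have h2 := hN2 n (by omega)
        have h3 : |-p n * x (n - k)| ≤ pp * 1 := by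
          rw [abs_mul, abs_neg]
          exact mul_le_mul (hN0 n (by omega)) (hx _) (abs_nonneg _) hpp0
        have h4 := abs_sub (-p n * x (n - k)) (tl (g x) n)
        linarith)
    (by
      intro x y D hx hy hD n
      have hD0 := (abs_nonneg _).trans (hD 0)
      simp only [hT]
      split_ifs with h
      · simp only [sub_self, abs_zero]; exact mul_nonneg (by linarith) hD0
      · have hn : N ≤ n := not_lt.1 h
        have h1 := tl_bound (hes.mul_left D) n (fun i hi => hgd x y D hx hy hD i (hn.trans hi))
        rw [tl_mul, ← tl_sub n (hgs x hx n hn) (hgs y hy n hn)] at h1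
        have h2 := hN2 n (by omega)
        have h2' : D * tl e n ≤ D * ((1 - pp) / 2) := by gcongr
        have h3 : |-p n * (x (n - k) - y (n - k))| ≤ pp * D := by
          rw [abs_mul, abs_neg]
          exact mul_le_mul (hN0 n (by omega)) (hD _) (abs_nonneg _) hpp0
        have h4 := abs_sub (-p n * (x (n - k) - y (n - k))) (tl (g x) n - tl (g y) n)
        have h5 : -p n * x (n - k) - tl (g x) n - (-p n * y (n - k) - tl (g y) n) =
          -p n * (x (n - k) - y (n - k)) - (tl (g x) n - tl (g y) n) := by ring
        rw [h5]
        linarith)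
  refine ⟨x, ⟨1, hx⟩, N, by omega, fun n hn => ?_⟩
  have hz : ∀ m, N ≤ m → x m + p m * x (m - k) = - tl (g x) m := by
    intro m hm
    have := hfix m
    simp only [hT, if_neg (not_lt.2 hm)] at this
    linarith
  have hdz : ∀ m, N ≤ m → r m * oddPow ((x (m + 1) + p (m + 1) * x (m + 1 - k)) -
      (x m + p m * x (m - k))) (γ m) = tl (G x) m := by
    intro m hm
    rw [hz m hm, hz (m + 1) (by omega)]
    have h1 := tl_succ m (hgs x hx m hm)
    have h2 : -tl (g x) (m + 1) - -tl (g x) m = g x m := by linarith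
    rw [h2]
    simp only [hg]
    rw [oddPow_inv (hγpos m)]
    simp only [hU]
    have := hr m
    field_simp
  rw [hdz n hn, hdz (n + 1) (by omega)]
  have h1 := tl_succ n (hGs x hx n)
  simp only [hG] at h1 ⊢
  linarith
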